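/- Consider a k-SAT instance and γ ∈ [0,1]. Let BP messages evolve by the normalized k-SAT BP iteration (left update from the current right messages, rescaling of the left messages, right update from the rescaled left messages, and summary computation from the current right messages), and let weighted PTP messages for the same instance evolve by the k-SAT weighted PTP update (with summaries computed from the current normalized right messages). Assume all messages are nonnegative and all normalizing denominators are nonzero throughout. Suppose the initial right messages satisfy, for every pair (v-c): ρ^BP_{c→v}(L∗) = ρ^BP_{c→v}(L̄∗) = ρ^BP_{c→v}(∗∗) (the state-decoupling condition), ρ^BP_{c→v}(L∗) = ρ^{norm,PTP}_{c→v}({0,1}), and ρ^BP_{c→v}(LL) = ρ^{norm,PTP}_{c→v}({0}) + ρ^{norm,PTP}_{c→v}({1}). Then at every subsequent iteration, for every pair (v-c) and every v ∈ V: λ^{norm,BP}_{v→c}(L∗) = [L_{v,c}=0]·λ^{norm,PTP}_{v→c}({0}) + [L_{v,c}=1]·λ^{norm,PTP}_{v→c}({1}); λ^{norm,BP}_{v→c}(L̄∗) = [L_{v,c}=0]·λ^{norm,PTP}_{v→c}({1}) + [L_{v,c}=1]·λ^{norm,PTP}_{v→c}({0}); λ^{norm,BP}_{v→c}(∗∗)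 = λ^{norm,PTP}_{v→c}({0,1}); ρ^BP_{c→v}(L∗) = ρ^{norm,PTP}_{c→v}({0,1}); ρ^BP_{c→v}(LL) = ρ^{norm,PTP}_{c→v}({0}) + ρ^{norm,PTP}_{c→v}({1}); and μ^BP_v({0}) = μ^PTP_v({0}), μ^BP_v({1}) = μ^PTP_v({1}), μ^BP_v(∗) = μ^PTP_v({0,1}). -/

import Mathlib

/-!
The proof propagates an invariant, `Decoupled`, along the iteration: each BP right message takes
the single value `r({0,1})` on `L∗`, `L̄∗`, `∗∗` and the value `r({0}) + r({1})` on `LL`, where `r`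
is the normalized PTP right message, which vanishes on the token opposite to the edge label.

Under the invariant, a product over `C(v) ∖ {c}` in the PTP left update splits according to whether
the label of `b` agrees with that of `c` (`prod_split`). This turns the BP left messages on `L∗`,
`L̄∗`, `∗∗` into the PTP left messages, already before rescaling (`left_corr`), and the BP summaries
into the PTP summaries (`mu_corr`). It also gives `λ(LL) = λ(L∗) + λ(∗∗)` (`left_LL`), so the sum
in the BP right update on `L̄∗` vanishes. As rescaled left messages have total mass one, the right
update then produces `1 - P` on `L∗`, `L̄∗`, `∗∗` and `P` on `LL`. The PTP right messages have
total mass one already, so the invariant holds again (`right_corr`).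
-/

open Finset

variable {V C : Type} [Fintype V] [DecidableEq V] [Fintype C] [DecidableEq C]

/-- A token: a nonempty subset of the alphabet. -/
abbrev Token (χ : Type) := {s : Finset χ // s.Nonempty}

/-- The token `{0}` (with `0 ↔ false`). -/
def tok0 : Token Bool := ⟨{false}, Finset.singleton_nonempty _⟩
/-- The token `{1}`. -/
def tok1 : Token Bool := ⟨{true}, Finset.singleton_nonempty _⟩
/-- The token `{0,1}`. -/
def tok01 : Token Bool := ⟨{false, true}, Finset.insert_nonempty _ _⟩

/-- `C(v)`. -/
def Cv (Vc : C → Finset V) (v : V) : Finset C := univ.filter fun c => v ∈ Vc c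

/-- `C_c^s(v)`. -/
def Cs (Vc : C → Finset V) (L : V → C → Bool) (v : V) (c : C) : Finset C :=
  ((Cv Vc v).erase c).filter fun b => L v b = L v c

/-- `C_c^u(v)`. -/
def Cu (Vc : C → Finset V) (L : V → C → Bool) (v : V) (c : C) : Finset C :=
  ((Cv Vc v).erase c).filter fun b => L v b ≠ L v c

/-- `C^1(v)`. -/
def C1 (Vc : C → Finset V) (L : V → C → Bool) (v : V) : Finset C :=
  (Cv Vc v).filter fun b => L v b = true

/-- `C^0(v)`. -/
def C0 (Vc : C → Finset V) (L : V → C → Bool) (v : V) : Finset C :=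
  (Cv Vc v).filter fun b => L v b = false

/-- `P_{c,v}` computed from normalized left messages `ln`. -/
def Pcv (Vc : C → Finset V) (L : V → C → Bool) (ln : V → C → Token Bool → ℝ)
    (c : C) (v : V) : ℝ :=
  (∏ u ∈ ((Vc c).erase v).filter (fun u => L u c = true), ln u c tok0) *
    ∏ u ∈ ((Vc c).erase v).filter (fun u => L u c = false), ln u c tok1

/-- The k-SAT weighted-PTP right update computed from normalized left messages. -/
def ptpR (Vc : C → Finset V) (L : V → C → Bool) (ln : V → C → Token Bool → ℝ) :
    C → V → Token Bool → ℝ := fun c v t =>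
  if t = tok0 then (if L v c = false then (1 : ℝ) else 0) * Pcv Vc L ln c v
  else if t = tok1 then (if L v c = true then (1 : ℝ) else 0) * Pcv Vc L ln c v
  else 1 - Pcv Vc L ln c v

/-- The k-SAT weighted-PTP left update computed from normalized right messages. -/
def ptpL (γ : ℝ) (Vc : C → Finset V) (rn : C → V → Token Bool → ℝ) :
    V → C → Token Bool → ℝ := fun v c t =>
  if t = tok0 then
    (∏ b ∈ (Cv Vc v).erase c, (rn b v tok0 + rn b v tok01)) -
      γ * ∏ b ∈ (Cv Vc v).erase c, rn b v tok01
  else if t = tok1 then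
    (∏ b ∈ (Cv Vc v).erase c, (rn b v tok1 + rn b v tok01)) -
      γ * ∏ b ∈ (Cv Vc v).erase c, rn b v tok01
  else γ * ∏ b ∈ (Cv Vc v).erase c, rn b v tok01

/-- The k-SAT weighted-PTP summary computed from normalized right messages. -/
def ptpMu (γ : ℝ) (Vc : C → Finset V) (rn : C → V → Token Bool → ℝ) :
    V → Token Bool → ℝ := fun v t =>
  if t = tok0 then
    (∏ c ∈ Cv Vc v, (rn c v tok0 + rn c v tok01)) - γ * ∏ c ∈ Cv Vc v, rn c v tok01
  else if t = tok1 then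
    (∏ c ∈ Cv Vc v, (rn c v tok1 + rn c v tok01)) - γ * ∏ c ∈ Cv Vc v, rn c v tok01
  else γ * ∏ c ∈ Cv Vc v, rn c v tok01

/-- Normalization of left messages: `m^norm := m/(m({0})+m({1})+m({0,1}))`. -/
noncomputable def normL (l : V → C → Token Bool → ℝ) : V → C → Token Bool → ℝ :=
  fun v c t => l v c t / (l v c tok0 + l v c tok1 + l v c tok01)

/-- Normalization of right messages. -/
noncomputable def normR (r : C → V → Token Bool → ℝ) : C → V → Token Bool → ℝ :=
  fun c v t => r c v t / (r c v tok0 + r c v tok1 + r c v tok01)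

/-- The sequence of weighted-PTP left messages: `lamSeq 0` is the initial left
message, and within iteration `n+1` the left messages `lamSeq (n+1)` are computed
from the normalized right messages of iteration `n`. -/
noncomputable def lamSeq (γ : ℝ) (Vc : C → Finset V) (L : V → C → Bool)
    (l0 : V → C → Token Bool → ℝ) : ℕ → V → C → Token Bool → ℝ :=
  fun n => (fun l => ptpL γ Vc (normR (ptpR Vc L (normL l))))^[n] l0

/-- The weighted-PTP right messages of iteration `n`, computed from the normalized
left messages of iteration `n`. -/
noncomputable def rhoAt (γ : ℝ) (Vc : C → Finset V) (L : V → C → Bool)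
    (l0 : V → C → Token Bool → ℝ) (n : ℕ) : C → V → Token Bool → ℝ :=
  ptpR Vc L (normL (lamSeq γ Vc L l0 n))

/-- The four state configurations supporting the k-SAT BP messages:
`LL = (L,L)`, `nLs = (L̄,∗)`, `Ls = (L,∗)`, `ss = (∗,∗)` (interpreted with respect to
each message's own edge label). -/
inductive BPConf : Type
  | LL | nLs | Ls | ss
deriving DecidableEq

/-- The BP left-message update for k-SAT on the normally realized MRF. -/
def bpLeft (γ : ℝ) (Vc : C → Finset V) (L : V → C → Bool)
    (ρ : C → V → BPConf → ℝ) : V → C → BPConf → ℝ := fun v c x =>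
  match x with
  | .LL => (∏ b ∈ Cu Vc L v c, ρ b v .nLs) * ∏ b ∈ Cs Vc L v c, (ρ b v .LL + ρ b v .Ls)
  | .nLs => (∏ b ∈ Cs Vc L v c, ρ b v .nLs) *
      ((∏ b ∈ Cu Vc L v c, (ρ b v .Ls + ρ b v .LL)) - γ * ∏ b ∈ Cu Vc L v c, ρ b v .Ls)
  | .Ls => (∏ b ∈ Cu Vc L v c, ρ b v .nLs) *
      ((∏ b ∈ Cs Vc L v c, (ρ b v .Ls + ρ b v .LL)) - γ * ∏ b ∈ Cs Vc L v c, ρ b v .Ls)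
  | .ss => γ * ∏ b ∈ (Cv Vc v).erase c, ρ b v .ss

/-- The BP right-message update for k-SAT on the normally realized MRF. -/
def bpRight (Vc : C → Finset V) (lam : V → C → BPConf → ℝ) :
    C → V → BPConf → ℝ := fun c v x =>
  match x with
  | .LL => ∏ u ∈ (Vc c).erase v, lam u c .nLs
  | .nLs =>
      (∏ u ∈ (Vc c).erase v, (lam u c .Ls + lam u c .ss + lam u c .nLs)) +
        (∑ u ∈ (Vc c).erase v, (lam u c .LL - lam u c .Ls - lam u c .ss) *
          ∏ w ∈ ((Vc c).erase v).erase u, lam w c .nLs) -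
        ∏ u ∈ (Vc c).erase v, lam u c .nLs
  | .Ls =>
      (∏ u ∈ (Vc c).erase v, (lam u c .Ls + lam u c .ss + lam u c .nLs)) -
        ∏ u ∈ (Vc c).erase v, lam u c .nLs
  | .ss =>
      (∏ u ∈ (Vc c).erase v, (lam u c .Ls + lam u c .ss + lam u c .nLs)) -
        ∏ u ∈ (Vc c).erase v, lam u c .nLs

/-- Rescaling of the BP left messages:
`λ^norm(x) := λ(x)/(λ(L∗)+λ(L̄∗)+λ(∗∗))`. -/
noncomputable def normBP (lam : V → C → BPConf → ℝ) : V → C → BPConf → ℝ :=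
  fun v c x => lam v c x / (lam v c .Ls + lam v c .nLs + lam v c .ss)

/-- BP summary `μ^BP_v({0})`. -/
def bpMu0 (γ : ℝ) (Vc : C → Finset V) (L : V → C → Bool)
    (ρ : C → V → BPConf → ℝ) (v : V) : ℝ :=
  (∏ c ∈ C1 Vc L v, ρ c v .nLs) *
    ((∏ c ∈ C0 Vc L v, (ρ c v .LL + ρ c v .Ls)) - γ * ∏ c ∈ C0 Vc L v, ρ c v .Ls)

/-- BP summary `μ^BP_v({1})`. -/
def bpMu1 (γ : ℝ) (Vc : C → Finset V) (L : V → C → Bool)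
    (ρ : C → V → BPConf → ℝ) (v : V) : ℝ :=
  (∏ c ∈ C0 Vc L v, ρ c v .nLs) *
    ((∏ c ∈ C1 Vc L v, (ρ c v .LL + ρ c v .Ls)) - γ * ∏ c ∈ C1 Vc L v, ρ c v .Ls)

/-- BP summary `μ^BP_v(∗)`. -/
def bpMuS (γ : ℝ) (Vc : C → Finset V) (L : V → C → Bool)
    (ρ : C → V → BPConf → ℝ) (v : V) : ℝ :=
  γ * ∏ c ∈ Cv Vc v, ρ c v .ss

/-- The sequence of BP right messages evolving by the normalized k-SAT BP iteration:
left update from the current right messages, rescaling, then right update from the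
rescaled left messages. -/
noncomputable def bpRhoSeq (γ : ℝ) (Vc : C → Finset V) (L : V → C → Bool)
    (ρ0 : C → V → BPConf → ℝ) : ℕ → C → V → BPConf → ℝ :=
  fun n => (fun r => bpRight Vc (normBP (bpLeft γ Vc L r)))^[n] ρ0

/-- The invariant relating BP right messages `ρ` to normalized PTP right messages `r`. -/
structure Decoupled (Vc : C → Finset V) (L : V → C → Bool)
    (ρ : C → V → BPConf → ℝ) (r : C → V → Token Bool → ℝ) : Prop where
  Ls : ∀ v, ∀ c ∈ Cv Vc v, ρ c v .Ls = r c v tok01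
  nLs : ∀ v, ∀ c ∈ Cv Vc v, ρ c v .nLs = r c v tok01
  ss : ∀ v, ∀ c ∈ Cv Vc v, ρ c v .ss = r c v tok01
  LL : ∀ v, ∀ c ∈ Cv Vc v, ρ c v .LL = r c v tok0 + r c v tok1
  zero0 : ∀ v, ∀ c ∈ Cv Vc v, L v c = true → r c v tok0 = 0
  zero1 : ∀ v, ∀ c ∈ Cv Vc v, L v c = false → r c v tok1 = 0

lemma tok1_ne_tok0 : tok1 ≠ tok0 := by decide
lemma tok01_ne_tok0 : tok01 ≠ tok0 := by decide
lemma tok01_ne_tok1 : tok01 ≠ tok1 := by decide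

/-- Splitting of a PTP left update (or summary) along a partition of the clause set: on `q` the
factor is `h`, on `p` it is `a`. -/
lemma prod_split {ι : Type} (S : Finset ι) (p q : ι → Prop) [DecidablePred p] [DecidablePred q]
    (hpq : ∀ b, q b ↔ ¬ p b) (γ : ℝ) (h₁ h₂ a h x : ι → ℝ)
    (H₁ : ∀ b ∈ S, q b → h₁ b = h b) (H₂ : ∀ b ∈ S, p b → h₂ b = h b)
    (Ha : ∀ b ∈ S, p b → x b = a b) (Hx : ∀ b ∈ S, q b → x b = h b) :
    (∏ b ∈ S.filter q, h₁ b) * ((∏ b ∈ S.filter p, a b) - γ * ∏ b ∈ S.filter p, h₂ b) =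
      (∏ b ∈ S, x b) - γ * ∏ b ∈ S, h b := by
  have hq : S.filter q = S.filter (fun b => ¬ p b) := filter_congr fun b _ => hpq b
  rw [← prod_filter_mul_prod_filter_not S p x, ← prod_filter_mul_prod_filter_not S p h, ← hq,
    prod_congr rfl (fun b hb => H₁ b (mem_filter.1 hb).1 (mem_filter.1 hb).2),
    prod_congr rfl (fun b hb => H₂ b (mem_filter.1 hb).1 (mem_filter.1 hb).2),
    prod_congr rfl (fun b hb => Ha b (mem_filter.1 hb).1 (mem_filter.1 hb).2),
    prod_congr rfl (fun b hb => Hx b (mem_filter.1 hb).1 (mem_filter.1 hb).2)]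
  ring

section

variable {Vc : C → Finset V} {L : V → C → Bool} {ρ : C → V → BPConf → ℝ}
  {r : C → V → Token Bool → ℝ}

/-- Before rescaling, the BP left messages are the PTP left messages, read with respect to the
edge label. -/
lemma left_corr (H : Decoupled Vc L ρ r) (γ : ℝ) (v : V) (c : C) :
    bpLeft γ Vc L ρ v c .Ls = (if L v c = false then ptpL γ Vc r v c tok0
      else ptpL γ Vc r v c tok1) ∧
    bpLeft γ Vc L ρ v c .nLs = (if L v c = false then ptpL γ Vc r v c tok1
      else ptpL γ Vc r v c tok0) ∧
    bpLeft γ Vc L ρ v c .ss = ptpL γ Vc r v c tok01 := by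
  have hS : ∀ b ∈ (Cv Vc v).erase c, b ∈ Cv Vc v := fun b hb => mem_of_mem_erase hb
  refine ⟨?_, ?_, ?_⟩
  · cases hL : L v c <;>
    simp only [bpLeft, ptpL, Cu, Cs, hL, if_true, if_false, tok1_ne_tok0, reduceCtorEq] <;>
    refine prod_split _ _ _ (fun b => Iff.rfl) _ _ _ _ _ _ (fun b hb _ => H.nLs v b (hS b hb))
      (fun b hb _ => H.Ls v b (hS b hb)) (fun b hb hp => ?_) (fun b hb hq => ?_)
    · rw [H.Ls v b (hS b hb), H.LL v b (hS b hb), H.zero1 v b (hS b hb) hp]; ring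
    · rw [H.zero0 v b (hS b hb) (by simpa using hq)]; ring
    · rw [H.Ls v b (hS b hb), H.LL v b (hS b hb), H.zero0 v b (hS b hb) hp]; ring
    · rw [H.zero1 v b (hS b hb) (by simpa using hq)]; ring
  · cases hL : L v c <;>
    simp only [bpLeft, ptpL, Cu, Cs, hL, if_true, if_false, tok1_ne_tok0, reduceCtorEq] <;>
    refine prod_split _ _ _ (fun b => not_not.symm) _ _ _ _ _ _
      (fun b hb _ => H.nLs v b (hS b hb))
      (fun b hb _ => H.Ls v b (hS b hb)) (fun b hb hp => ?_) (fun b hb hq => ?_)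
    · rw [H.Ls v b (hS b hb), H.LL v b (hS b hb), H.zero0 v b (hS b hb) (by simpa using hp)]
      ring
    · rw [H.zero1 v b (hS b hb) hq]; ring
    · rw [H.Ls v b (hS b hb), H.LL v b (hS b hb), H.zero1 v b (hS b hb) (by simpa using hp)]
      ring
    · rw [H.zero0 v b (hS b hb) hq]; ring
  · simp only [bpLeft, ptpL, tok01_ne_tok0, tok01_ne_tok1, if_false]
    rw [prod_congr rfl fun b hb => H.ss v b (hS b hb)]

/-- The BP left messages inherit a decoupling relation, which removes the correction sum from the
right update. -/
lemma left_LL (H : Decoupled Vc L ρ r) (γ : ℝ) (v : V) (c : C) :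
    bpLeft γ Vc L ρ v c .LL - bpLeft γ Vc L ρ v c .Ls - bpLeft γ Vc L ρ v c .ss = 0 := by
  have hS : ∀ b ∈ (Cv Vc v).erase c, b ∈ Cv Vc v := fun b hb => mem_of_mem_erase hb
  simp only [bpLeft, Cu, Cs]
  rw [← prod_filter_mul_prod_filter_not ((Cv Vc v).erase c) (fun b => L v b = L v c)
      (fun b => ρ b v .ss)]
  have e1 : ∀ b ∈ (Cv Vc v).erase c, ρ b v .ss = ρ b v .Ls := fun b hb => by
    rw [H.ss v b (hS b hb), H.Ls v b (hS b hb)]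
  have e2 : ∀ b ∈ (Cv Vc v).erase c, ρ b v .ss = ρ b v .nLs := fun b hb => by
    rw [H.ss v b (hS b hb), H.nLs v b (hS b hb)]
  rw [prod_congr rfl fun b hb => e1 b (mem_filter.1 hb).1,
    prod_congr rfl fun b hb => e2 b (mem_filter.1 hb).1]
  simp only [add_comm (ρ _ v .LL)]
  ring

lemma mu_corr (H : Decoupled Vc L ρ r) (γ : ℝ) (v : V) :
    bpMu0 γ Vc L ρ v = ptpMu γ Vc r v tok0 ∧
    bpMu1 γ Vc L ρ v = ptpMu γ Vc r v tok1 ∧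
    bpMuS γ Vc L ρ v = ptpMu γ Vc r v tok01 := by
  refine ⟨?_, ?_, ?_⟩
  · simp only [bpMu0, ptpMu, C0, C1, if_true]
    refine prod_split _ _ _ (fun b => by simp) _ _ _ _ _ _ (fun b hb _ => H.nLs v b hb)
      (fun b hb _ => H.Ls v b hb) (fun b hb hp => ?_) (fun b hb hq => ?_)
    · rw [H.Ls v b hb, H.LL v b hb, H.zero1 v b hb hp]; ring
    · rw [H.zero0 v b hb hq]; ring
  · simp only [bpMu1, ptpMu, C0, C1, if_true, if_false, tok1_ne_tok0]
    refine prod_split _ _ _ (fun b => by simp) _ _ _ _ _ _ (fun b hb _ => H.nLs v b hb)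
      (fun b hb _ => H.Ls v b hb) (fun b hb hp => ?_) (fun b hb hq => ?_)
    · rw [H.Ls v b hb, H.LL v b hb, H.zero0 v b hb hp]; ring
    · rw [H.zero1 v b hb hq]; ring
  · simp only [bpMuS, ptpMu, tok01_ne_tok0, tok01_ne_tok1, if_false]
    rw [prod_congr rfl fun b hb => H.ss v b hb]

lemma norm_left_corr (H : Decoupled Vc L ρ r) (γ : ℝ) (v : V) (c : C) :
    normBP (bpLeft γ Vc L ρ) v c .Ls = (if L v c = false then normL (ptpL γ Vc r) v c tok0
      else normL (ptpL γ Vc r) v c tok1) ∧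
    normBP (bpLeft γ Vc L ρ) v c .nLs = (if L v c = false then normL (ptpL γ Vc r) v c tok1
      else normL (ptpL γ Vc r) v c tok0) ∧
    normBP (bpLeft γ Vc L ρ) v c .ss = normL (ptpL γ Vc r) v c tok01 := by
  obtain ⟨h1, h2, h3⟩ := left_corr H γ v c
  simp only [normBP, normL, h1, h2, h3]
  cases L v c
  · simp
  · simp [add_comm (ptpL γ Vc r v c tok1)]

/-- PTP right messages have total mass one, so normalizing them changes nothing. -/
lemma normR_ptpR (l : V → C → Token Bool → ℝ) : normR (ptpR Vc L l) = ptpR Vc L l := by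
  funext c v t
  have : ptpR Vc L l c v tok0 + ptpR Vc L l c v tok1 + ptpR Vc L l c v tok01 = 1 := by
    simp only [ptpR, tok1_ne_tok0, tok01_ne_tok0, tok01_ne_tok1, if_true, if_false]
    cases L v c <;> simp
  simp only [normR, this, div_one]

lemma ptpR_zero0 (l : V → C → Token Bool → ℝ) (c : C) (v : V) (h : L v c = true) :
    ptpR Vc L l c v tok0 = 0 := by simp [ptpR, h]

lemma ptpR_zero1 (l : V → C → Token Bool → ℝ) (c : C) (v : V) (h : L v c = false) :
    ptpR Vc L l c v tok1 = 0 := by simp [ptpR, h, tok1_ne_tok0]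

/-- One full iteration preserves the invariant. -/
lemma right_corr (H : Decoupled Vc L ρ r) (γ : ℝ)
    (hnz : ∀ v c, bpLeft γ Vc L ρ v c .Ls + bpLeft γ Vc L ρ v c .nLs +
      bpLeft γ Vc L ρ v c .ss ≠ 0) :
    Decoupled Vc L (bpRight Vc (normBP (bpLeft γ Vc L ρ)))
      (normR (ptpR Vc L (normL (ptpL γ Vc r)))) := by
  rw [normR_ptpR]
  set lam := normBP (bpLeft γ Vc L ρ) with hlam
  have hone : ∀ u c, lam u c .Ls + lam u c .ss + lam u c .nLs = 1 := fun u c => by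
    simp only [hlam, normBP, ← add_div]
    rw [add_right_comm, div_self (hnz u c)]
  have hzero : ∀ u c, lam u c .LL - lam u c .Ls - lam u c .ss = 0 := fun u c => by
    simp only [hlam, normBP, ← sub_div, left_LL H γ u c, zero_div]
  have hP : ∀ c v, ∏ u ∈ (Vc c).erase v, lam u c .nLs =
      Pcv Vc L (normL (ptpL γ Vc r)) c v := fun c v => by
    have hf : ((Vc c).erase v).filter (fun u => L u c = false) =
        ((Vc c).erase v).filter (fun u => ¬ L u c = true) := filter_congr fun u _ => by simp
    rw [Pcv, hf, ← prod_filter_mul_prod_filter_not _ (fun u => L u c = true)]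
    congr 1 <;> refine prod_congr rfl fun u hu => ?_ <;>
      rw [hlam, (norm_left_corr H γ u c).2.1] <;> simp [(mem_filter.1 hu).2]
  have h01 : ∀ c v, ptpR Vc L (normL (ptpL γ Vc r)) c v tok01 =
      1 - Pcv Vc L (normL (ptpL γ Vc r)) c v := fun c v => by
    simp only [ptpR, tok01_ne_tok0, tok01_ne_tok1, if_false]
  constructor
  · intro v c _
    simp only [bpRight, hone, hP, prod_const_one, h01]
  · intro v c _
    simp only [bpRight, hone, hzero, hP, prod_const_one, h01, zero_mul, sum_const_zero, add_zero]
  · intro v c _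
    simp only [bpRight, hone, hP, prod_const_one, h01]
  · intro v c _
    simp only [bpRight, hP, ptpR, tok1_ne_tok0, if_true, if_false]
    cases L v c <;> simp
  · exact fun v c _ h => ptpR_zero0 _ c v h
  · exact fun v c _ h => ptpR_zero1 _ c v h

end

/-- For a k-SAT instance and `γ ∈ [0,1]`, let BP messages evolve by
the normalized k-SAT BP iteration and weighted-PTP messages evolve by the k-SAT
weighted-PTP update, all messages nonnegative and all normalizing denominators nonzero
throughout.  If the initial right messages satisfy the state-decoupling condition
`ρ^BP(L∗) = ρ^BP(L̄∗) = ρ^BP(∗∗)` together with `ρ^BP(L∗) = ρ^{norm,PTP}({0,1})` and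
`ρ^BP(LL) = ρ^{norm,PTP}({0}) + ρ^{norm,PTP}({1})` for every pair `(v-c)`, then at
every subsequent iteration the normalized BP left messages, the BP right messages and
the BP summaries correspond to the weighted-PTP ones as stated. -/
theorem stmt12 (γ : ℝ) (hγ0 : 0 ≤ γ) (hγ1 : γ ≤ 1)
    (k : ℕ) (Vc : C → Finset V) (L : V → C → Bool)
    (hk2 : 2 ≤ k) (hk : ∀ c : C, (Vc c).card = k)
    (hCv : ∀ v : V, 2 ≤ (Cv Vc v).card)
    (ρ0 : C → V → BPConf → ℝ) (l0 : V → C → Token Bool → ℝ)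
    -- all BP messages are nonnegative throughout
    (hnnBPL : ∀ (n : ℕ) (v : V) (c : C) (x : BPConf),
      0 ≤ bpLeft γ Vc L (bpRhoSeq γ Vc L ρ0 n) v c x)
    (hnnBPR : ∀ (n : ℕ) (c : C) (v : V) (x : BPConf), 0 ≤ bpRhoSeq γ Vc L ρ0 n c v x)
    -- all BP rescaling denominators are nonzero throughout
    (hnzBP : ∀ (n : ℕ) (v : V) (c : C),
      bpLeft γ Vc L (bpRhoSeq γ Vc L ρ0 n) v c .Ls +
        bpLeft γ Vc L (bpRhoSeq γ Vc L ρ0 n) v c .nLs +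
        bpLeft γ Vc L (bpRhoSeq γ Vc L ρ0 n) v c .ss ≠ 0)
    -- all PTP messages are nonnegative throughout
    (hnnL : ∀ (n : ℕ) (v : V) (c : C) (t : Token Bool), 0 ≤ lamSeq γ Vc L l0 n v c t)
    (hnnR : ∀ (n : ℕ) (c : C) (v : V) (t : Token Bool), 0 ≤ rhoAt γ Vc L l0 n c v t)
    -- all PTP normalizing denominators are nonzero throughout
    (hnzL : ∀ (n : ℕ) (v : V) (c : C),
      lamSeq γ Vc L l0 n v c tok0 + lamSeq γ Vc L l0 n v c tok1 +
        lamSeq γ Vc L l0 n v c tok01 ≠ 0)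
    (hnzR : ∀ (n : ℕ) (c : C) (v : V),
      rhoAt γ Vc L l0 n c v tok0 + rhoAt γ Vc L l0 n c v tok1 +
        rhoAt γ Vc L l0 n c v tok01 ≠ 0)
    -- the state-decoupling condition on the initial right messages
    (hsd0 : ∀ v : V, ∀ c ∈ Cv Vc v,
      ρ0 c v .Ls = ρ0 c v .nLs ∧ ρ0 c v .nLs = ρ0 c v .ss)
    -- the initial correspondence between BP and PTP right messages
    (hcorr0 : ∀ v : V, ∀ c ∈ Cv Vc v,
      ρ0 c v .Ls = normR (rhoAt γ Vc L l0 0) c v tok01 ∧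
      ρ0 c v .LL =
        normR (rhoAt γ Vc L l0 0) c v tok0 + normR (rhoAt γ Vc L l0 0) c v tok1) :
    ∀ n : ℕ,
      -- correspondence of the (normalized) left messages of iteration n+1
      (∀ v : V, ∀ c ∈ Cv Vc v,
        normBP (bpLeft γ Vc L (bpRhoSeq γ Vc L ρ0 n)) v c .Ls =
          (if L v c = false then (1 : ℝ) else 0) *
              normL (lamSeq γ Vc L l0 (n + 1)) v c tok0 +
            (if L v c = true then (1 : ℝ) else 0) *
              normL (lamSeq γ Vc L l0 (n + 1)) v c tok1 ∧
        normBP (bpLeft γ Vc L (bpRhoSeq γ Vc L ρ0 n)) v c .nLs =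
          (if L v c = false then (1 : ℝ) else 0) *
              normL (lamSeq γ Vc L l0 (n + 1)) v c tok1 +
            (if L v c = true then (1 : ℝ) else 0) *
              normL (lamSeq γ Vc L l0 (n + 1)) v c tok0 ∧
        normBP (bpLeft γ Vc L (bpRhoSeq γ Vc L ρ0 n)) v c .ss =
          normL (lamSeq γ Vc L l0 (n + 1)) v c tok01) ∧
      -- correspondence of the right messages of iteration n+1
      (∀ v : V, ∀ c ∈ Cv Vc v,
        bpRhoSeq γ Vc L ρ0 (n + 1) c v .Ls =
          normR (rhoAt γ Vc L l0 (n + 1)) c v tok01 ∧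
        bpRhoSeq γ Vc L ρ0 (n + 1) c v .LL =
          normR (rhoAt γ Vc L l0 (n + 1)) c v tok0 +
            normR (rhoAt γ Vc L l0 (n + 1)) c v tok1) ∧
      -- correspondence of the summaries of iteration n+1
      (∀ v : V,
        bpMu0 γ Vc L (bpRhoSeq γ Vc L ρ0 (n + 1)) v =
          ptpMu γ Vc (normR (rhoAt γ Vc L l0 (n + 1))) v tok0 ∧
        bpMu1 γ Vc L (bpRhoSeq γ Vc L ρ0 (n + 1)) v =
          ptpMu γ Vc (normR (rhoAt γ Vc L l0 (n + 1))) v tok1 ∧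
        bpMuS γ Vc L (bpRhoSeq γ Vc L ρ0 (n + 1)) v =
          ptpMu γ Vc (normR (rhoAt γ Vc L l0 (n + 1))) v tok01) := by
  have hstepB : ∀ n, bpRhoSeq γ Vc L ρ0 (n + 1) =
      bpRight Vc (normBP (bpLeft γ Vc L (bpRhoSeq γ Vc L ρ0 n))) := fun n => by
    simp only [bpRhoSeq, Function.iterate_succ_apply']
  have hstepL : ∀ n, lamSeq γ Vc L l0 (n + 1) =
      ptpL γ Vc (normR (rhoAt γ Vc L l0 n)) := fun n => by
    simp only [lamSeq, rhoAt, Function.iterate_succ_apply']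
  have hinv : ∀ n, Decoupled Vc L (bpRhoSeq γ Vc L ρ0 n) (normR (rhoAt γ Vc L l0 n)) := by
    intro n
    induction n with
    | zero =>
      have h0 : bpRhoSeq γ Vc L ρ0 0 = ρ0 := rfl
      rw [h0]
      refine ⟨fun v c hc => (hcorr0 v c hc).1, fun v c hc => ?_, fun v c hc => ?_,
        fun v c hc => (hcorr0 v c hc).2, fun v c _ h => ?_, fun v c _ h => ?_⟩
      · rw [← (hsd0 v c hc).1, (hcorr0 v c hc).1]
      · rw [← (hsd0 v c hc).2, ← (hsd0 v c hc).1, (hcorr0 v c hc).1]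
      · rw [rhoAt, normR_ptpR, ptpR_zero0 _ c v h]
      · rw [rhoAt, normR_ptpR, ptpR_zero1 _ c v h]
    | succ n ih =>
      rw [hstepB, rhoAt, hstepL]
      exact right_corr ih γ (hnzBP n)
  intro n
  refine ⟨fun v c _ => ?_, fun v c hc => ⟨(hinv (n + 1)).Ls v c hc, (hinv (n + 1)).LL v c hc⟩,
    fun v => mu_corr (hinv (n + 1)) γ v⟩
  obtain ⟨h1, h2, h3⟩ := norm_left_corr (hinv n) γ v c
  rw [hstepL, h1, h2, h3]
  cases L v c <;> simp
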